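/- Let 𝒜 = ((a_{N,n})_{N∈ℕ})_{n∈ℕ} be a double sequence of weights on 𝔻 with a_{N,n+1} ≤ a_{N,n} ≤ a_{N+1,n} pointwise, satisfying conditions (LOG) and (Σ), and assume 𝒜 is contained in a set W of essential weights which is closed under pointwise maxima of finitely many of its elements. Then 𝒜 satisfies both conditions (Q) and (B) if and only if 𝒜 satisfies both conditions (wQ) and (B). -/

import Mathlib

noncomputable section

open Complex

/-- The open unit disc in ℂ. -/
def uD : Set ℂ := {z : ℂ | ‖z‖ < 1}

/-- Holomorphic on the unit disc. -/
def Holo (f : ℂ → ℂ) : Prop := DifferentiableOn ℂ f uD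

/-- A weight on 𝔻: continuous and strictly positive. -/
def IsWeight (v : ℂ → ℝ) : Prop :=
  ContinuousOn v uD ∧ ∀ z ∈ uD, 0 < v z

/-- Radial weight. -/
def Radial (v : ℂ → ℝ) : Prop :=
  ∀ z ∈ uD, ∀ w ∈ uD, ‖z‖ = ‖w‖ → v z = v w

/-- Non-increasing in the modulus. -/
def NonInc (v : ℂ → ℝ) : Prop :=
  ∀ z ∈ uD, ∀ w ∈ uD, ‖z‖ ≤ ‖w‖ → v w ≤ v z

/-- r₀ = 0, r_κ = 1 - 2^(-2^κ) for κ ≥ 1. -/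
def rseq (κ : ℕ) : ℝ := if κ = 0 then 0 else 1 - 1 / 2 ^ (2 ^ κ)

/-- Condition (LOG 1) for a single radial weight. -/
def Log1 (A : ℝ) (v : ℂ → ℝ) : Prop :=
  ∀ κ : ℕ, v (rseq κ : ℂ) ≤ A * v (rseq (κ + 1) : ℂ)

/-- Condition (LOG 2) for a single radial weight. -/
def Log2 (a : ℝ) (v : ℂ → ℝ) : Prop :=
  ∀ κ : ℕ, v (rseq (κ + 1) : ℂ) ≤ a * v (rseq κ : ℂ)

/-- The weight tends to 0 as |z| → 1. -/
def VanishAtOne (v : ℂ → ℝ) : Prop :=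
  ∀ ε > 0, ∃ r : ℝ, r < 1 ∧ ∀ z ∈ uD, r ≤ ‖z‖ → v z ≤ ε

/-- Associated growth function w~ of a growth condition w. -/
def growthTilde (w : ℂ → ℝ) (z : ℂ) : ℝ :=
  sSup {t : ℝ | ∃ g : ℂ → ℂ, Holo g ∧ (∀ x ∈ uD, ‖g x‖ ≤ w x) ∧ t = ‖g z‖}

/-- Associated weight ṽ = 1/(1/v)~. -/
def assocWeight (v : ℂ → ℝ) (z : ℂ) : ℝ := (growthTilde (fun x => 1 / v x) z)⁻¹

/-- Monotonicity of the double sequence: decreasing in n, increasing in N. -/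
def MonoSeq (a : ℕ → ℕ → ℂ → ℝ) : Prop :=
  ∀ N n, ∀ z ∈ uD, a N (n + 1) z ≤ a N n z ∧ a N n z ≤ a (N + 1) n z

/-- Condition (LOG) for a double sequence with constants 0 < a < 1 < A. -/
def SeqLOG (aa A : ℝ) (a : ℕ → ℕ → ℂ → ℝ) : Prop :=
  ∀ N n, Radial (a N n) ∧ NonInc (a N n) ∧ VanishAtOne (a N n) ∧
    Log1 A (a N n) ∧ Log2 aa (a N n)

/-- Condition (Q). -/
def CondQ (a : ℕ → ℕ → ℂ → ℝ) : Prop :=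
  ∀ N, ∃ M ≥ N, ∃ n, ∀ K ≥ M, ∀ m, ∀ ε > 0, ∃ k, ∃ S > 0,
    ∀ z ∈ uD, 1 / a M m z ≤ max (ε / a N n z) (S / a K k z)

/-- Condition (wQ). -/
def CondwQ (a : ℕ → ℕ → ℂ → ℝ) : Prop :=
  ∀ N, ∃ M ≥ N, ∃ n, ∀ K ≥ M, ∀ m, ∃ k, ∃ S > 0,
    ∀ z ∈ uD, 1 / a M m z ≤ max (S / a N n z) (S / a K k z)

/-- Condition (Q)~. -/
def CondQTilde (a : ℕ → ℕ → ℂ → ℝ) : Prop :=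
  ∀ N, ∃ M ≥ N, ∃ n, ∀ K ≥ M, ∀ m, ∀ ε > 0, ∃ k, ∃ S > 0,
    ∀ z ∈ uD, growthTilde (fun x => 1 / a M m x) z ≤
      growthTilde (fun x => max (ε / a N n x) (S / a K k x)) z

/-- Pointwise maximum max_{N=1,…,L} a_{N,n(N)}. -/
def finMax (a : ℕ → ℕ → ℂ → ℝ) (nn : ℕ → ℕ) (L : ℕ) (z : ℂ) : ℝ :=
  sSup {t : ℝ | ∃ N, 1 ≤ N ∧ N ≤ L ∧ t = a N (nn N) z}

/-- Condition (B). -/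
def CondB (a : ℕ → ℕ → ℂ → ℝ) : Prop :=
  ∀ nn : ℕ → ℕ, ∃ m, ∀ M, ∃ L, 1 ≤ L ∧ ∃ c > 0,
    ∀ z ∈ uD, a M m z ≤ c * finMax a nn L z

/-- Condition (B)~. -/
def CondBTilde (a : ℕ → ℕ → ℂ → ℝ) : Prop :=
  ∀ nn : ℕ → ℕ, ∃ m, ∀ M, ∃ L, 1 ≤ L ∧ ∃ c > 0,
    ∀ z ∈ uD, assocWeight (a M m) z ≤ c * assocWeight (finMax a nn L) z

/-- A weight is essential. -/
def Essential (v : ℂ → ℝ) : Prop :=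
  ∃ C > 0, ∀ z ∈ uD,
    growthTilde (fun x => 1 / v x) z ≤ 1 / v z ∧
    1 / v z ≤ C * growthTilde (fun x => 1 / v x) z

/-- Condition (Σ). -/
def CondSigma (a : ℕ → ℕ → ℂ → ℝ) : Prop :=
  ∀ N, ∃ K ≥ N, ∀ k, ∃ n ≥ k, ∀ ε > 0, ∃ Q : Set ℂ,
    IsCompact Q ∧ Q ⊆ uD ∧ ∀ z ∈ uD \ Q, a N n z / a K k z ≤ ε

/-- The Banach space Ha(𝔻) as a set of functions. -/
def HaSet (v : ℂ → ℝ) : Set (ℂ → ℂ) :=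
  {f | Holo f ∧ ∃ C : ℝ, ∀ z ∈ uD, v z * ‖f z‖ ≤ C}

/-!
Condition (Σ) trades the constant `S` in the first term of (wQ) for an arbitrarily small `ε`:
apply (wQ) to the index `N'` which (Σ) assigns to `N`. Off a compact set,
`S / a_{N',n'} ≤ ε / a_{N,n}` because `a_{N,n} / a_{N',n'}` vanishes at infinity. On that
compact set the continuous function `a_{K,k} / a_{M,m}` is bounded, so enlarging `S` in the
second term suffices.
-/

section VanishesAtInfinity

variable {X : Type*} [TopologicalSpace X] {s Q : Set X} {f u u' w : X → ℝ}

/-- `f` vanishes at infinity on `s`, with compact exceptional sets inside `s` and a one-sided bound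
(`f ≤ ε` rather than `|f| ≤ ε`), as in condition (Σ), where `f` is a quotient of weights. -/
def VanishesAtInfinityOn (f : X → ℝ) (s : Set X) : Prop :=
  ∀ ε > 0, ∃ Q : Set X, IsCompact Q ∧ Q ⊆ s ∧ ∀ x ∈ s \ Q, f x ≤ ε

theorem exists_le_div_of_isCompact (hQ : IsCompact Q) (hf : ContinuousOn f Q)
    (hw : ContinuousOn w Q) (hw_pos : ∀ x ∈ Q, 0 < w x) : ∃ C, ∀ x ∈ Q, f x ≤ C / w x := by
  obtain ⟨C, hC⟩ := hQ.bddAbove_image (hf.mul hw)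
  exact ⟨C, fun x hx => (le_div_iff₀ (hw_pos x hx)).2 (hC (Set.mem_image_of_mem _ hx))⟩

theorem VanishesAtInfinityOn.exists_le_max_div (hvan : VanishesAtInfinityOn (fun x => u x / u' x) s)
    (hf : ContinuousOn f s) (hw : ContinuousOn w s) (hw_pos : ∀ x ∈ s, 0 < w x)
    (hu_pos : ∀ x ∈ s, 0 < u x) (hu'_pos : ∀ x ∈ s, 0 < u' x) {S : ℝ} (hS : 0 < S)
    (hfS : ∀ x ∈ s, f x ≤ max (S / u' x) (S / w x)) {ε : ℝ} (hε : 0 < ε) :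
    ∃ T > 0, ∀ x ∈ s, f x ≤ max (ε / u x) (T / w x) := by
  obtain ⟨Q, hQ, hQs, hsmall⟩ := hvan (ε / S) (div_pos hε hS)
  obtain ⟨C, hC⟩ := exists_le_div_of_isCompact hQ (hf.mono hQs) (hw.mono hQs)
    fun x hx => hw_pos x (hQs hx)
  refine ⟨max S C, lt_max_of_lt_left hS, fun x hx => ?_⟩
  have hw_nonneg := (hw_pos x hx).le
  by_cases hxQ : x ∈ Q
  · calc f x ≤ C / w x := hC x hxQ
      _ ≤ max S C / w x := by gcongr; exact le_max_right S C
      _ ≤ max (ε / u x) (max S C / w x) := le_max_right _ _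
  · have hfirst : S / u' x ≤ ε / u x := by
      have hquot : u x / u' x ≤ ε / S := hsmall x ⟨hx, hxQ⟩
      rw [div_le_div_iff₀ (hu'_pos x hx) hS] at hquot
      rw [div_le_div_iff₀ (hu'_pos x hx) (hu_pos x hx)]
      linarith
    calc f x ≤ max (S / u' x) (S / w x) := hfS x hx
      _ ≤ max (ε / u x) (max S C / w x) := by gcongr; exact le_max_left S C

end VanishesAtInfinity

section ConditionQ

variable {a : ℕ → ℕ → ℂ → ℝ}

theorem CondQ.condwQ (ha : ∀ N n, ∀ z ∈ uD, 0 ≤ a N n z) (hQ : CondQ a) : CondwQ a := by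
  intro N
  obtain ⟨M, hNM, n, hM⟩ := hQ N
  refine ⟨M, hNM, n, fun K hMK m => ?_⟩
  obtain ⟨k, S, -, hk⟩ := hM K hMK m 1 one_pos
  refine ⟨k, max 1 S, lt_max_of_lt_left one_pos, fun z hz => ?_⟩
  have hN_nonneg := ha N n z hz
  have hK_nonneg := ha K k z hz
  calc 1 / a M m z ≤ max (1 / a N n z) (S / a K k z) := hk z hz
    _ ≤ max (max 1 S / a N n z) (max 1 S / a K k z) := by
      gcongr
      exacts [le_max_left 1 S, le_max_right 1 S]

theorem CondwQ.condQ (hW : ∀ N n, IsWeight (a N n)) (hSigma : CondSigma a) (hwQ : CondwQ a) :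
    CondQ a := by
  intro N
  obtain ⟨N', hNN', hN'⟩ := hSigma N
  obtain ⟨M, hN'M, n', hM⟩ := hwQ N'
  obtain ⟨n, -, hvan⟩ := hN' n'
  refine ⟨M, hNN'.trans hN'M, n, fun K hMK m ε hε => ?_⟩
  obtain ⟨k, S, hS, hk⟩ := hM K hMK m
  have hcont : ContinuousOn (fun z => 1 / a M m z) uD :=
    continuousOn_const.div (hW M m).1 fun z hz => ((hW M m).2 z hz).ne'
  exact ⟨k, VanishesAtInfinityOn.exists_le_max_div hvan hcont (hW K k).1 (hW K k).2 (hW N n).2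
    (hW N' n').2 hS hk hε⟩

theorem condQB_iff_condwQB_general (hW : ∀ N n, IsWeight (a N n)) (hSigma : CondSigma a) :
    CondQ a ↔ CondwQ a :=
  ⟨CondQ.condwQ fun N n z hz => ((hW N n).2 z hz).le, CondwQ.condQ hW hSigma⟩

end ConditionQ

/-- under (LOG), (Σ) and with 𝒜 contained in a max-closed set of
essential weights, (Q) ∧ (B) ⟺ (wQ) ∧ (B). -/
theorem condQB_iff_condwQB (a' A : ℝ) (ha0 : 0 < a') (ha1 : a' < 1) (hA : 1 < A)
    (a : ℕ → ℕ → ℂ → ℝ)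
    (hW : ∀ N n, IsWeight (a N n)) (hMono : MonoSeq a)
    (hLOG : SeqLOG a' A a) (hSigma : CondSigma a)
    (W : Set (ℂ → ℝ))
    (hWweight : ∀ v ∈ W, IsWeight v)
    (hWess : ∀ v ∈ W, Essential v)
    (hWmax : ∀ v ∈ W, ∀ w ∈ W, (fun z => max (v z) (w z)) ∈ W)
    (hain : ∀ N n, a N n ∈ W) :
    (CondQ a ∧ CondB a) ↔ (CondwQ a ∧ CondB a) := by
  exact and_congr_left fun _ => condQB_iff_condwQB_general hW hSigma
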